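/- Let σ > 0 and b > 1/2. There exists a constant C > 0, independent of σ, such that for every Schwartz function u : ℝ² → ℂ the function G : ℝ² → ℂ defined by G(ξ,τ) = ξ · ∫_{ℝ⁴} [1 − cosh(σ|ξ|)·sech(σ|ξ₁|)·sech(σ|ξ₂|)·sech(σ|ξ−ξ₁−ξ₂|)] · û(ξ₁,τ₁)·û(ξ₂,τ₂)·û(ξ−ξ₁−ξ₂, τ−τ₁−τ₂) dξ₁ dξ₂ dτ₁ dτ₂ satisfies ‖G‖_{L²(ℝ²)} ≤ C σ² · ( ∫_{ℝ²} (1+|ξ|)^{4} (1+|τ−ξ³|)^{2b} |û(ξ,τ)|² dξ dτ )^{3/2}. -/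

import Mathlib

open MeasureTheory ENNReal

lemma aux_schwartz (u : SchwartzMap (ℝ × ℝ) ℂ) (uhat : ℝ × ℝ → ℂ)
    (h : ∀ p : ℝ × ℝ,
        uhat p = ∫ q : ℝ × ℝ, Complex.exp (-Complex.I * (q.1 * p.1 + q.2 * p.2)) * u q) :
    ∃ V : SchwartzMap (ℝ × ℝ) ℂ, ∀ p, uhat p = V p := by
  let e := WithLp.prodContinuousLinearEquiv 2 ℝ ℝ ℝ
  have hpi : (2 * Real.pi)⁻¹ ≠ 0 := by positivity
  let s : (ℝ × ℝ) ≃L[ℝ] (ℝ × ℝ) := ContinuousLinearEquiv.smulLeft (Units.mk0 ((2 * Real.pi)⁻¹) hpi)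
  let v : SchwartzMap (WithLp 2 (ℝ × ℝ)) ℂ := SchwartzMap.compCLMOfContinuousLinearEquiv ℂ e u
  let Fv : SchwartzMap (WithLp 2 (ℝ × ℝ)) ℂ := FourierTransform.fourier v
  refine ⟨SchwartzMap.compCLMOfContinuousLinearEquiv ℂ (s.trans e.symm) Fv, fun p => ?_⟩
  rw [h p]
  have h1 : (SchwartzMap.compCLMOfContinuousLinearEquiv ℂ (s.trans e.symm) Fv) p
      = Fv (WithLp.toLp 2 ((2 * Real.pi)⁻¹ • p)) := rfl
  have h2 : ∀ x, Fv x = FourierTransform.fourier (fun y => v y) x := fun x => by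
    rw [← SchwartzMap.fourier_coe]
  rw [h1, h2, Real.fourier_eq']
  rw [← (WithLp.volume_preserving_ofLp ℝ ℝ).integral_comp
    (MeasurableEquiv.toLp 2 (ℝ × ℝ)).symm.measurableEmbedding]
  apply integral_congr_ae
  refine Filter.Eventually.of_forall fun x => ?_
  have h3 : v x = u x.ofLp := rfl
  simp only [h3, smul_eq_mul]
  congr 2
  simp [WithLp.prod_inner_apply]
  field_simp

lemma aux_meas (b : ℝ) : Measurable (fun p : ℝ × ℝ => (1 + |p.1|) ^ 4 * (1 + |p.2 - p.1 ^ 3|) ^ (2 * b)) := by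
  fun_prop

lemma aux_integrable (b : ℝ) (V : SchwartzMap (ℝ × ℝ) ℂ) :
    Integrable (fun p : ℝ × ℝ => (1 + |p.1|) ^ 4 * (1 + |p.2 - p.1 ^ 3|) ^ (2 * b) * ‖V p‖ ^ 2) := by
  obtain ⟨n, hn⟩ := exists_nat_ge (2 * b)
  set A := 2 ^ (4 + 3 * n + 3) * (Finset.Iic ((4 + 3 * n + 3, 0) : ℕ × ℕ)).sup (fun m => SchwartzMap.seminorm ℂ m.1 m.2) V with hA
  have hV : ∀ p, (1 + ‖p‖) ^ (4 + 3 * n + 3) * ‖V p‖ ≤ A := fun p => by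
    simpa using SchwartzMap.one_add_le_sup_seminorm_apply (𝕜 := ℂ) (m := (4 + 3 * n + 3, 0)) (k := 4 + 3 * n + 3) (n := 0) le_rfl le_rfl V p
  have hi : Integrable (fun p : ℝ × ℝ => (A * A) * (1 + ‖p‖) ^ (-(3:ℝ))) := by
    refine (integrable_one_add_norm ?_).const_mul _
    simp; norm_num
  refine hi.mono' ?_ ?_
  · exact ((aux_meas b).mul (by fun_prop)).aestronglyMeasurable
  · refine Filter.Eventually.of_forall fun p => ?_
    have hN : 1 ≤ 1 + ‖p‖ := by simp
    have hp1 : |p.1| ≤ ‖p‖ := norm_fst_le p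
    have hp2 : |p.2| ≤ ‖p‖ := norm_snd_le p
    have hw : (1 + |p.2 - p.1 ^ 3|) ^ (2 * b) ≤ (1 + ‖p‖) ^ (3 * n) := by
      have h1 : 1 + |p.2 - p.1 ^ 3| ≤ (1 + ‖p‖) ^ 3 := by
        have : |p.2 - p.1 ^ 3| ≤ |p.2| + |p.1| ^ 3 := by
          rw [← abs_pow]; exact abs_sub _ _
        have h3 : |p.1| ^ 3 ≤ ‖p‖ ^ 3 := by gcongr
        nlinarith [norm_nonneg p, sq_nonneg ‖p‖]
      calc (1 + |p.2 - p.1 ^ 3|) ^ (2 * b) ≤ (1 + |p.2 - p.1 ^ 3|) ^ (n : ℝ) :=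
            Real.rpow_le_rpow_of_exponent_le (by simp) hn
        _ = (1 + |p.2 - p.1 ^ 3|) ^ n := Real.rpow_natCast _ _
        _ ≤ ((1 + ‖p‖) ^ 3) ^ n := by gcongr
        _ = _ := by rw [← pow_mul]
    have hw1 : (1 + |p.1|) ^ 4 ≤ (1 + ‖p‖) ^ 4 := by gcongr
    have hV1 : ‖V p‖ ≤ A := le_trans (le_mul_of_one_le_left (norm_nonneg _) (one_le_pow₀ hN)) (hV p)
    rw [Real.norm_of_nonneg (by positivity)]
    have e3 : (1 + ‖p‖) ^ (-(3:ℝ)) = ((1 + ‖p‖) ^ 3)⁻¹ := by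
      rw [Real.rpow_neg (by positivity)]; norm_cast
    rw [e3, ← div_eq_mul_inv, le_div_iff₀ (by positivity)]
    calc (1 + |p.1|) ^ 4 * (1 + |p.2 - p.1 ^ 3|) ^ (2 * b) * ‖V p‖ ^ 2 * (1 + ‖p‖) ^ 3
        ≤ (1 + ‖p‖) ^ 4 * (1 + ‖p‖) ^ (3 * n) * ‖V p‖ ^ 2 * (1 + ‖p‖) ^ 3 := by gcongr
      _ = ((1 + ‖p‖) ^ (4 + 3 * n + 3) * ‖V p‖) * ‖V p‖ := by ring
      _ ≤ A * A := mul_le_mul (hV p) hV1 (norm_nonneg _) (le_trans (norm_nonneg _) hV1)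

lemma aux_tanh (x : ℝ) : |Real.sinh x * (Real.cosh x)⁻¹| ≤ |x| := by
  rw [← div_eq_mul_inv, abs_div, abs_of_pos (Real.cosh_pos x), div_le_iff₀ (Real.cosh_pos x)]
  wlog hx : 0 ≤ x generalizing x
  · have := this (-x) (by linarith)
    simpa using this
  rw [abs_of_nonneg (Real.sinh_nonneg_iff.2 hx), abs_of_nonneg hx]
  let f : ℝ → ℝ := fun y => y * Real.cosh y - Real.sinh y
  have hd : ∀ y, HasDerivAt f (y * Real.sinh y) y := fun y => by
    have := ((hasDerivAt_id y).mul (Real.hasDerivAt_cosh y)).sub (Real.hasDerivAt_sinh y)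
    exact this.congr_deriv (by simp only [id_eq, one_mul]; ring)
  have hm : MonotoneOn f (Set.Ici 0) := by
    apply monotoneOn_of_deriv_nonneg (convex_Ici 0)
    · exact fun y _ => (hd y).continuousAt.continuousWithinAt
    · exact fun y _ => (hd y).differentiableAt.differentiableWithinAt
    · intro y hy
      rw [(hd y).deriv]
      have : 0 ≤ y := by simpa using interior_subset hy
      exact mul_nonneg this (Real.sinh_nonneg_iff.2 this)
  have := hm (Set.mem_Ici.2 le_rfl) (Set.mem_Ici.2 hx) hx
  simp [f] at this
  linarith

lemma aux_mult (σ ξ x y : ℝ) (hσ : 0 < σ) :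
    |ξ| * |1 - Real.cosh (σ * |ξ|) * (Real.cosh (σ * |x|))⁻¹ * (Real.cosh (σ * |y|))⁻¹ *
      (Real.cosh (σ * |ξ - x - y|))⁻¹| ≤ σ ^ 2 * ((1 + |x|) * (1 + |y|) * (1 + |ξ - x - y|) *
        ((1 + |x|) + (1 + |y|) + (1 + |ξ - x - y|))) := by
  have hc : ∀ z, Real.cosh (σ * |z|) = Real.cosh (σ * z) := fun z => by
    rw [← Real.cosh_abs (σ * z), abs_mul, abs_of_pos hσ]
  simp only [hc]
  obtain ⟨z, hz⟩ : ∃ z, z = ξ - x - y := ⟨_, rfl⟩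
  have hξ : ξ = x + y + z := by rw [hz]; ring
  rw [← hz]
  have e : 1 - Real.cosh (σ * ξ) * (Real.cosh (σ * x))⁻¹ * (Real.cosh (σ * y))⁻¹ *
      (Real.cosh (σ * z))⁻¹ = -((Real.sinh (σ * x) * (Real.cosh (σ * x))⁻¹) * (Real.sinh (σ * y) * (Real.cosh (σ * y))⁻¹)
        + (Real.sinh (σ * x) * (Real.cosh (σ * x))⁻¹) * (Real.sinh (σ * z) * (Real.cosh (σ * z))⁻¹)
        + (Real.sinh (σ * y) * (Real.cosh (σ * y))⁻¹) * (Real.sinh (σ * z) * (Real.cosh (σ * z))⁻¹)) := by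
    have h1 := (Real.cosh_pos (σ * x)).ne'
    have h2 := (Real.cosh_pos (σ * y)).ne'
    have h3 := (Real.cosh_pos (σ * z)).ne'
    rw [hξ, mul_add, mul_add, Real.cosh_add, Real.cosh_add, Real.sinh_add]
    field_simp
    ring
  have ht : ∀ w, |Real.sinh (σ * w) * (Real.cosh (σ * w))⁻¹| ≤ σ * |w| := fun w => by
    have := aux_tanh (σ * w)
    rwa [abs_mul σ w, abs_of_pos hσ] at this
  rw [e, abs_neg]
  have hx := ht x
  have hy := ht y
  have hz' := ht z
  generalize Real.sinh (σ * x) * (Real.cosh (σ * x))⁻¹ = X at *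
  generalize Real.sinh (σ * y) * (Real.cosh (σ * y))⁻¹ = Y at *
  generalize Real.sinh (σ * z) * (Real.cosh (σ * z))⁻¹ = Z at *
  have hm : |X * Y + X * Z + Y * Z| ≤ σ ^ 2 * (|x| * |y| + |x| * |z| + |y| * |z|) := by
    calc _ ≤ |X| * |Y| + |X| * |Z| + |Y| * |Z| := by
          simpa only [abs_mul] using abs_add_three (X * Y) (X * Z) (Y * Z)
      _ ≤ (σ * |x|) * (σ * |y|) + (σ * |x|) * (σ * |z|) + (σ * |y|) * (σ * |z|) := by gcongr
      _ = _ := by ring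
  have hx3 : |ξ| ≤ (1 + |x|) + (1 + |y|) + (1 + |z|) := by
    rw [hξ]; have := abs_add_three x y z; linarith
  have hab : |x| * |y| + |x| * |z| + |y| * |z| ≤ (1 + |x|) * (1 + |y|) * (1 + |z|) := by
    have : 0 ≤ |x| * |y| * |z| := by positivity
    nlinarith [abs_nonneg x, abs_nonneg y, abs_nonneg z]
  calc _ ≤ ((1 + |x|) + (1 + |y|) + (1 + |z|)) * (σ ^ 2 * ((1 + |x|) * (1 + |y|) * (1 + |z|))) := by
        apply mul_le_mul hx3 (hm.trans _) (abs_nonneg _) (by positivity)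
        gcongr
    _ = _ := by ring

lemma aux_fin (b : ℝ) (hb : 1 / 2 < b) :
    ∫⁻ p : ℝ × ℝ, ENNReal.ofReal ((1 + |p.1|) ^ (-(2:ℝ))) * ENNReal.ofReal ((1 + |p.2 - p.1 ^ 3|) ^ (-(2 * b))) < ∞ := by
  have h1 : ∫⁻ x : ℝ, ENNReal.ofReal ((1 + ‖x‖) ^ (-(2:ℝ))) < ∞ :=
    finite_integral_one_add_norm (by simp)
  have h2 : ∫⁻ x : ℝ, ENNReal.ofReal ((1 + ‖x‖) ^ (-(2 * b))) < ∞ :=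
    finite_integral_one_add_norm (by simp; linarith)
  rw [Measure.volume_eq_prod, lintegral_prod _ (by fun_prop)]
  have : ∀ x : ℝ, ∫⁻ y : ℝ, ENNReal.ofReal ((1 + |x|) ^ (-(2:ℝ))) * ENNReal.ofReal ((1 + |y - x ^ 3|) ^ (-(2 * b))) = ENNReal.ofReal ((1 + ‖x‖) ^ (-(2:ℝ))) * ∫⁻ x : ℝ, ENNReal.ofReal ((1 + ‖x‖) ^ (-(2 * b))) := fun x => by
    rw [lintegral_const_mul _ (by fun_prop), lintegral_sub_right_eq_self (fun y => ENNReal.ofReal ((1 + |y|) ^ (-(2 * b))))]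
    rfl
  simp only [this]
  rw [lintegral_mul_const _ (by fun_prop)]
  exact ENNReal.mul_lt_top h1 h2

lemma aux_rearr (F : ℝ × ℝ → ℝ × ℝ → ℝ≥0∞) (hF : Measurable (Function.uncurry F)) :
    ∫⁻ w : ℝ × ℝ × ℝ × ℝ, F (w.1, w.2.2.1) (w.2.1, w.2.2.2) = ∫⁻ p, ∫⁻ q, F p q := by
  have hF' : ∀ {α : Type} [MeasurableSpace α] (f g : α → ℝ × ℝ), Measurable f → Measurable g →
      Measurable fun a => F (f a) (g a) := fun f g hf hg => hF.comp (hf.prodMk hg)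
  have hR : ∀ p, ∫⁻ q, F p q = ∫⁻ x : ℝ, ∫⁻ y : ℝ, F p (x, y) := fun p => by
    rw [Measure.volume_eq_prod, lintegral_prod _ (hF' _ _ (by fun_prop) (by fun_prop)).aemeasurable]
  simp only [hR]
  have m1 : Measurable fun (a : (ℝ × ℝ) × ℝ) => ∫⁻ y : ℝ, F a.1 (a.2, y) :=
    Measurable.lintegral_prod_right' (f := fun z : ((ℝ × ℝ) × ℝ) × ℝ => F z.1.1 (z.1.2, z.2)) (hF' _ _ (by fun_prop) (by fun_prop))
  have m2 : Measurable fun (a : (ℝ × ℝ)) => ∫⁻ x : ℝ, ∫⁻ y : ℝ, F a (x, y) :=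
    Measurable.lintegral_prod_right' m1
  rw [Measure.volume_eq_prod ℝ ℝ, lintegral_prod _ m2.aemeasurable]
  rw [Measure.volume_eq_prod ℝ (ℝ × ℝ × ℝ), lintegral_prod _ (hF' _ _ (by fun_prop) (by fun_prop)).aemeasurable]
  congr 1; ext a
  rw [Measure.volume_eq_prod ℝ (ℝ × ℝ), lintegral_prod _ (hF' _ _ (by fun_prop) (by fun_prop)).aemeasurable]
  symm
  rw [lintegral_lintegral_swap
    (f := fun t x : ℝ => ∫⁻ y : ℝ, F (a, t) (x, y))
    (m1.comp (f := fun z : ℝ × ℝ => ((a, z.1), z.2)) (by fun_prop)).aemeasurable]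
  refine lintegral_congr fun c => ?_
  rw [Measure.volume_eq_prod ℝ ℝ,
    lintegral_prod _ (hF' _ _ (by fun_prop) (by fun_prop)).aemeasurable]

lemma aux_cs0 {α : Type*} [MeasurableSpace α] (μ : Measure α) (k h : α → ℝ≥0∞)
    (hk : Measurable k) (hh : Measurable h) :
    (∫⁻ x, k x * h x ∂μ) ^ 2 ≤ (∫⁻ x, k x ^ 2 ∂μ) * ∫⁻ x, h x ^ 2 ∂μ := by
  have := ENNReal.lintegral_mul_le_Lp_mul_Lq μ Real.HolderConjugate.two_two
    hk.aemeasurable hh.aemeasurable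
  simp only [Pi.mul_apply] at this
  calc _ ≤ _ := pow_le_pow_left' this 2
    _ = _ := by
      rw [mul_pow, ← ENNReal.rpow_mul_natCast, ← ENNReal.rpow_mul_natCast]
      norm_num

lemma aux_cs {α : Type*} [MeasurableSpace α] (μ : Measure α) (k h : α → ℝ≥0∞)
    (hk : Measurable k) (hh : Measurable h) :
    (∫⁻ x, k x * h x ∂μ) ^ 2 ≤ (∫⁻ x, k x ∂μ) * ∫⁻ x, k x * h x ^ 2 ∂μ := by
  have hs : ∀ x, k x ^ (1/2 : ℝ) * k x ^ (1/2 : ℝ) = k x := fun x => by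
    rw [← ENNReal.rpow_add_of_nonneg _ _ (by norm_num) (by norm_num)]; norm_num
  have := aux_cs0 μ (fun x => k x ^ (1/2 : ℝ)) (fun x => k x ^ (1/2 : ℝ) * h x)
    (by fun_prop) (by fun_prop)
  simp only [← mul_assoc, hs, mul_pow] at this
  simp only [sq (k _ ^ (1/2 : ℝ)), hs] at this
  exact this

lemma aux_young (k h : ℝ × ℝ → ℝ≥0∞) (hk : Measurable k) (hh : Measurable h) :
    ∫⁻ p, (∫⁻ q, k q * h (p - q)) ^ 2 ≤ (∫⁻ q, k q) ^ 2 * ∫⁻ q, h q ^ 2 := by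
  calc ∫⁻ p, (∫⁻ q, k q * h (p - q)) ^ 2
      ≤ ∫⁻ p, (∫⁻ q, k q) * ∫⁻ q, k q * h (p - q) ^ 2 :=
        lintegral_mono fun p => aux_cs volume k (fun q => h (p - q)) hk (by fun_prop)
    _ = (∫⁻ q, k q) * ∫⁻ p, ∫⁻ q, k q * h (p - q) ^ 2 := by
        rw [lintegral_const_mul]
        exact Measurable.lintegral_prod_right'
          (f := fun z : (ℝ × ℝ) × (ℝ × ℝ) => k z.2 * h (z.1 - z.2) ^ 2) (by fun_prop)
    _ = (∫⁻ q, k q) * ∫⁻ q, ∫⁻ p, k q * h (p - q) ^ 2 := by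
        rw [lintegral_lintegral_swap]
        exact Measurable.aemeasurable (by unfold Function.uncurry; fun_prop)
    _ = (∫⁻ q, k q) * ∫⁻ q, k q * ∫⁻ p, h p ^ 2 := by
        congr 1
        refine lintegral_congr fun q => ?_
        rw [lintegral_const_mul _ (by fun_prop), lintegral_sub_right_eq_self (fun p => h p ^ 2)]
    _ = _ := by rw [lintegral_mul_const _ hk, sq, mul_assoc]

lemma aux_young2 (g h : ℝ × ℝ → ℝ≥0∞) (hg : Measurable g) (hh : Measurable h) :
    ∫⁻ p, (∫⁻ q, ∫⁻ r, g q * g r * h (p - q - r)) ^ 2 ≤ (∫⁻ q, g q) ^ 4 * ∫⁻ q, h q ^ 2 := by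
  have hm : Measurable fun p => ∫⁻ r, g r * h (p - r) :=
    Measurable.lintegral_prod_right'
      (f := fun z : (ℝ × ℝ) × (ℝ × ℝ) => g z.2 * h (z.1 - z.2)) (by fun_prop)
  have e : ∀ p q, ∫⁻ r, g q * g r * h (p - q - r) = g q * ∫⁻ r, g r * h (p - q - r) :=
    fun p q => by
      rw [← lintegral_const_mul _ (by fun_prop)]
      simp only [mul_assoc]
  simp only [e]
  calc _ ≤ (∫⁻ q, g q) ^ 2 * ∫⁻ q, (∫⁻ r, g r * h (q - r)) ^ 2 := aux_young g _ hg hm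
    _ ≤ (∫⁻ q, g q) ^ 2 * ((∫⁻ q, g q) ^ 2 * ∫⁻ q, h q ^ 2) := by
        gcongr; exact aux_young g h hg hh
    _ = _ := by ring

/-- the three trilinear terms coincide -/
lemma aux_sym (g h : ℝ × ℝ → ℝ≥0∞) (hg : Measurable g) (hh : Measurable h) (p : ℝ × ℝ) :
    ∫⁻ q, ∫⁻ r, (h q * g r * g (p - q - r) + g q * h r * g (p - q - r)
      + g q * g r * h (p - q - r)) = 3 * ∫⁻ q, ∫⁻ r, g q * g r * h (p - q - r) := by
  have mm : ∀ f : (ℝ × ℝ) × (ℝ × ℝ) → ℝ≥0∞, Measurable f → Measurable fun q => ∫⁻ r, f (q, r) :=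
    fun f hf => hf.lintegral_prod_right'
  have h2 : ∫⁻ q, ∫⁻ r, g q * h r * g (p - q - r) = ∫⁻ q, ∫⁻ r, g q * g r * h (p - q - r) := by
    refine lintegral_congr fun q => ?_
    rw [← lintegral_sub_left_eq_self _ (p - q)]
    refine lintegral_congr fun r => ?_
    rw [_root_.sub_sub_cancel]; ring
  have h1 : ∫⁻ q, ∫⁻ r, h q * g r * g (p - q - r) = ∫⁻ q, ∫⁻ r, g q * h r * g (p - q - r) := by
    rw [lintegral_lintegral_swap (Measurable.aemeasurable (by unfold Function.uncurry; fun_prop))]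
    refine lintegral_congr fun q => lintegral_congr fun r => ?_
    rw [sub_right_comm]; ring
  have e : ∀ q, ∫⁻ r, (h q * g r * g (p - q - r) + g q * h r * g (p - q - r)
      + g q * g r * h (p - q - r)) = (∫⁻ r, h q * g r * g (p - q - r)) +
        (∫⁻ r, g q * h r * g (p - q - r)) + ∫⁻ r, g q * g r * h (p - q - r) := fun q => by
    rw [lintegral_add_left (by fun_prop), lintegral_add_left (by fun_prop)]
  have m1 := mm (fun z => h z.1 * g z.2 * g (p - z.1 - z.2)) (by fun_prop)
  have m2 := mm (fun z => g z.1 * h z.2 * g (p - z.1 - z.2)) (by fun_prop)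
  simp only at m1 m2
  simp only [e]
  rw [lintegral_add_left (by exact m1.add m2), lintegral_add_left m1, h1, h2]
  ring

open MeasureTheory ENNReal

/-- Estimate (2.7) of Lemma 2.6 of the paper: `‖F(U)‖_{L²_{x,t}} ≤ C σ² ‖U‖³_{X^{2,b}}`,
stated on the Fourier side. `G` is (up to constants) the space-time Fourier transform
of the commutator term `F(U)`, and the constant `C` is independent of `σ`. -/
theorem commutator_L2_est (b : ℝ) (hb : 1 / 2 < b) :
    ∃ C > 0, ∀ σ : ℝ, 0 < σ → ∀ u : SchwartzMap (ℝ × ℝ) ℂ, ∀ uhat G : ℝ × ℝ → ℂ,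
      (∀ p : ℝ × ℝ,
        uhat p = ∫ q : ℝ × ℝ, Complex.exp (-Complex.I * (q.1 * p.1 + q.2 * p.2)) * u q) →
      (∀ ξ τ : ℝ,
        G (ξ, τ) = (ξ : ℂ) * ∫ w : ℝ × ℝ × ℝ × ℝ,
          (((1 - Real.cosh (σ * |ξ|) * (Real.cosh (σ * |w.1|))⁻¹ *
              (Real.cosh (σ * |w.2.1|))⁻¹ *
              (Real.cosh (σ * |ξ - w.1 - w.2.1|))⁻¹ : ℝ) : ℂ) *
            uhat (w.1, w.2.2.1) * uhat (w.2.1, w.2.2.2) *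
            uhat (ξ - w.1 - w.2.1, τ - w.2.2.1 - w.2.2.2))) →
      eLpNorm G 2 volume ≤
        ENNReal.ofReal (C * σ ^ 2 *
          (∫ p : ℝ × ℝ, (1 + |p.1|) ^ 4 * (1 + |p.2 - p.1 ^ 3|) ^ (2 * b) *
            ‖uhat p‖ ^ 2) ^ ((3 : ℝ) / 2)) := by
  set D := ∫⁻ p : ℝ × ℝ, ENNReal.ofReal ((1 + |p.1|) ^ (-(2:ℝ))) *
    ENNReal.ofReal ((1 + |p.2 - p.1 ^ 3|) ^ (-(2 * b))) with hD
  have hDfin : D < ∞ := aux_fin b hb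
  refine ⟨3 * D.toReal + 1, by positivity, ?_⟩
  intro σ hσ u uhat G hu hG
  obtain ⟨V, hV⟩ := aux_schwartz u uhat hu
  have hint := aux_integrable b V
  simp only [← hV] at hint
  set M := ∫ p : ℝ × ℝ, (1 + |p.1|) ^ 4 * (1 + |p.2 - p.1 ^ 3|) ^ (2 * b) *
            ‖uhat p‖ ^ 2 with hM
  have hMpos : 0 ≤ M := integral_nonneg fun p => by positivity
  have hum : Measurable uhat := by
    have : uhat = V := funext hV
    rw [this]; exact V.continuous.measurable
  have hML : ENNReal.ofReal M = ∫⁻ p : ℝ × ℝ, ENNReal.ofReal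
      ((1 + |p.1|) ^ 4 * (1 + |p.2 - p.1 ^ 3|) ^ (2 * b) * ‖uhat p‖ ^ 2) :=
    ofReal_integral_eq_lintegral_ofReal hint (Filter.Eventually.of_forall fun p => by positivity)
  let g : ℝ × ℝ → ℝ≥0∞ := fun p => ENNReal.ofReal ((1 + |p.1|) * ‖uhat p‖)
  let h : ℝ × ℝ → ℝ≥0∞ := fun p => ENNReal.ofReal ((1 + |p.1|) ^ 2 * ‖uhat p‖)
  have hgm : Measurable g := by fun_prop
  have hhm : Measurable h := by fun_prop
  have hh2 : ∫⁻ p, h p ^ 2 ≤ ENNReal.ofReal M := by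
    rw [hML]
    refine lintegral_mono fun p => ?_
    simp only [h]
    rw [← ENNReal.ofReal_pow (by positivity)]
    apply ENNReal.ofReal_le_ofReal
    have : 1 ≤ (1 + |p.2 - p.1 ^ 3|) ^ (2 * b) := Real.one_le_rpow (by simp) (by linarith)
    calc ((1 + |p.1|) ^ 2 * ‖uhat p‖) ^ 2 = (1 + |p.1|) ^ 4 * 1 * ‖uhat p‖ ^ 2 := by ring
      _ ≤ _ := by gcongr
  have hg1 : (∫⁻ p, g p) ^ 2 ≤ D * ENNReal.ofReal M := by
    have := aux_cs0 (volume : Measure (ℝ × ℝ))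
      (fun p => ENNReal.ofReal ((1 + |p.1|) ^ (-(1:ℝ)) * (1 + |p.2 - p.1 ^ 3|) ^ (-b)))
      (fun p => ENNReal.ofReal ((1 + |p.1|) ^ 2 * (1 + |p.2 - p.1 ^ 3|) ^ b * ‖uhat p‖))
      (by fun_prop) (by fun_prop)
    convert this using 2
    · refine lintegral_congr fun p => ?_
      simp only [g]
      rw [← ENNReal.ofReal_mul (by positivity)]
      congr 1
      have hp : 0 < 1 + |p.1| := by positivity
      have hq : 0 < 1 + |p.2 - p.1 ^ 3| := by positivity
      rw [Real.rpow_neg hp.le, Real.rpow_neg hq.le, Real.rpow_one]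
      have := (Real.rpow_pos_of_pos hq b).ne'
      field_simp
    · rw [hD]
      refine lintegral_congr fun p => ?_
      have hp : 0 < 1 + |p.1| := by positivity
      have hq : 0 < 1 + |p.2 - p.1 ^ 3| := by positivity
      rw [← ENNReal.ofReal_mul (by positivity), ← ENNReal.ofReal_pow (by positivity), mul_pow,
        ← Real.rpow_mul_natCast hp.le, ← Real.rpow_mul_natCast hq.le]
      congr 3 <;> push_cast <;> ring_nf
    · rw [hML]
      refine lintegral_congr fun p => ?_
      have hq : 0 < 1 + |p.2 - p.1 ^ 3| := by positivity
      rw [← ENNReal.ofReal_pow (by positivity), mul_pow, mul_pow, ← Real.rpow_mul_natCast hq.le]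
      congr 1
      rw [mul_comm b]; push_cast; ring
  have hGp : ∀ p, ‖G p‖ₑ ≤ ENNReal.ofReal (3 * σ ^ 2) *
      ∫⁻ q, ∫⁻ r, g q * g r * h (p - q - r) := by
    rintro ⟨ξ, τ⟩
    have hm3 : Measurable (Function.uncurry fun q r : ℝ × ℝ =>
      (h q * g r * g ((ξ, τ) - q - r) + g q * h r * g ((ξ, τ) - q - r)
      + g q * g r * h ((ξ, τ) - q - r))) := by unfold Function.uncurry; fun_prop
    have e := aux_rearr _ hm3
    rw [aux_sym g h hgm hhm] at e
    rw [ENNReal.ofReal_mul (by norm_num), mul_comm (ENNReal.ofReal 3), mul_assoc,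
      ENNReal.ofReal_ofNat, ← e, hG, enorm_mul]
    calc _ ≤ ‖(ξ : ℂ)‖ₑ * ∫⁻ w : ℝ × ℝ × ℝ × ℝ, _ := by
            gcongr; exact enorm_integral_le_lintegral_enorm _
      _ = ∫⁻ w : ℝ × ℝ × ℝ × ℝ, _ := (lintegral_const_mul' _ _ (by simp)).symm
      _ ≤ ∫⁻ w : ℝ × ℝ × ℝ × ℝ, _ := lintegral_mono fun w => ?_
      _ = _ := lintegral_const_mul' _ _ (by simp)
    simp only [g, h, Prod.mk_sub_mk]
    rw [← ENNReal.ofReal_mul (by positivity), ← ENNReal.ofReal_mul (by positivity),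
      ← ENNReal.ofReal_mul (by positivity), ← ENNReal.ofReal_mul (by positivity),
      ← ENNReal.ofReal_mul (by positivity), ← ENNReal.ofReal_mul (by positivity),
      ← ENNReal.ofReal_add (by positivity) (by positivity),
      ← ENNReal.ofReal_add (by positivity) (by positivity),
      ← ENNReal.ofReal_mul (by positivity), ← enorm_mul, ← ofReal_norm]
    apply ENNReal.ofReal_le_ofReal
    simp only [norm_mul, Complex.norm_real, Real.norm_eq_abs]
    have := mul_le_mul_of_nonneg_right (aux_mult σ ξ w.1 w.2.1 hσ)
      (show 0 ≤ ‖uhat (w.1, w.2.2.1)‖ * ‖uhat (w.2.1, w.2.2.2)‖ *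
            ‖uhat (ξ - w.1 - w.2.1, τ - w.2.2.1 - w.2.2.2)‖ by positivity)
    refine le_trans (le_of_eq ?_) (this.trans (le_of_eq ?_)) <;> ring
  have hG2 : eLpNorm G 2 volume ^ 2 ≤
      (ENNReal.ofReal ((3 * D.toReal + 1) * σ ^ 2 * M ^ ((3 : ℝ) / 2))) ^ 2 := by
    have e1 : eLpNorm G 2 volume ^ 2 = ∫⁻ p, ‖G p‖ₑ ^ 2 := by
      rw [eLpNorm_eq_lintegral_rpow_enorm_toReal (by norm_num) (by norm_num),
        ← ENNReal.rpow_mul_natCast]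
      norm_num
    rw [e1]
    calc ∫⁻ p, ‖G p‖ₑ ^ 2 ≤ ∫⁻ p, ENNReal.ofReal (3 * σ ^ 2) ^ 2 *
          (∫⁻ q, ∫⁻ r, g q * g r * h (p - q - r)) ^ 2 := lintegral_mono fun p => by
            rw [← mul_pow]; exact pow_le_pow_left' (hGp p) 2
      _ = ENNReal.ofReal (3 * σ ^ 2) ^ 2 *
          ∫⁻ p, (∫⁻ q, ∫⁻ r, g q * g r * h (p - q - r)) ^ 2 :=
            lintegral_const_mul' _ _ (ENNReal.pow_ne_top ENNReal.ofReal_ne_top)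
      _ ≤ ENNReal.ofReal (3 * σ ^ 2) ^ 2 * (((∫⁻ q, g q) ^ 2) ^ 2 * ∫⁻ q, h q ^ 2) := by
            rw [← pow_mul]; gcongr; exact aux_young2 g h hgm hhm
      _ ≤ ENNReal.ofReal (3 * σ ^ 2) ^ 2 * ((D * ENNReal.ofReal M) ^ 2 * ENNReal.ofReal M) := by
            gcongr
      _ = ENNReal.ofReal ((3 * σ ^ 2) ^ 2 * ((D.toReal * M) ^ 2 * M)) := by
            nth_rewrite 1 [← ENNReal.ofReal_toReal hDfin.ne]
            rw [← ENNReal.ofReal_mul (by positivity), ← ENNReal.ofReal_pow (by positivity),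
              ← ENNReal.ofReal_pow (by positivity), ← ENNReal.ofReal_mul (by positivity),
              ← ENNReal.ofReal_mul (by positivity)]
      _ ≤ _ := by
            rw [← ENNReal.ofReal_pow (by positivity)]
            apply ENNReal.ofReal_le_ofReal
            have e3 : (M ^ ((3 : ℝ) / 2)) ^ 2 = M ^ 3 := by
              rw [← Real.rpow_mul_natCast hMpos]; norm_num
            rw [mul_pow _ (M ^ ((3 : ℝ) / 2)), e3]
            have : (3 * D.toReal) ^ 2 ≤ (3 * D.toReal + 1) ^ 2 := by gcongr; linarith
            calc (3 * σ ^ 2) ^ 2 * ((D.toReal * M) ^ 2 * M)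
                = (3 * D.toReal) ^ 2 * (σ ^ 4 * M ^ 3) := by ring
              _ ≤ (3 * D.toReal + 1) ^ 2 * (σ ^ 4 * M ^ 3) := by gcongr
              _ = _ := by ring
  exact (ENNReal.pow_le_pow_left_iff (by norm_num)).1 hG2
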